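/- The ring R is almost coherent (i.e., every almost finitely generated ideal of R is almost finitely presented) if and only if every finitely generated ideal of R is almost finitely presented. -/

import Mathlib

universe u

/-- A module `M` is almost finitely generated (relative to the ideal `m`):
for every `s ∈ m` there are `n` and `f : Rⁿ →ₗ M` with `s • coker f = 0`. -/
def IsAlmostFG {R : Type u} [CommRing R] (m : Ideal R)
    (M : Type u) [AddCommGroup M] [Module R M] : Prop :=
  ∀ s ∈ m, ∃ (n : ℕ) (f : (Fin n → R) →ₗ[R] M), ∀ y : M, s • y ∈ LinearMap.range f

/-- A module `M` is almost finitely presented (relative to the ideal `m`):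
for all `s, t ∈ m` there are `n, k` and maps `g : Rᵏ →ₗ Rⁿ`, `f : Rⁿ →ₗ M` with
`f ∘ g = 0`, `s • coker f = 0` and `t • ker f ⊆ im g`. -/
def IsAlmostFP {R : Type u} [CommRing R] (m : Ideal R)
    (M : Type u) [AddCommGroup M] [Module R M] : Prop :=
  ∀ s ∈ m, ∀ t ∈ m, ∃ (n k : ℕ) (g : (Fin k → R) →ₗ[R] (Fin n → R))
    (f : (Fin n → R) →ₗ[R] M),
      f ∘ₗ g = 0 ∧ (∀ y : M, s • y ∈ LinearMap.range f) ∧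
        (∀ x ∈ LinearMap.ker f, t • x ∈ LinearMap.range g)

/-!
Over an almost finitely presented module `M`, the kernel of *every* surjection `p` from a finite
projective module is almost finitely generated. Indeed, let `Rᵏ → Rⁿ → M` be a presentation up to
`a, b ∈ m`. Lifting `Rⁿ → M` along `p`, and lifting `a • p` along `Rⁿ → M`, compares `p` with that
presentation and shows that `a * b` multiplies `ker p` into a finitely generated submodule. Such
products generate `m * m = m`.

An almost finitely generated submodule `N` admits, up to `s ∈ m`, a map `f : Rⁿ → N`. The
presentation with error `s` can keep this same `f`, because `ker f` is also the kernel of the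
surjection from `Rⁿ` onto the finitely generated submodule `range f`.
-/

section FGConductor

variable (R : Type*) [CommRing R] (M : Type*) [AddCommGroup M] [Module R M]

/-- The ideal of all scalars multiplying `M` into some finitely generated submodule of `M`. It is
the unit ideal iff `M` is finitely generated, and contains `m` iff `M` is almost finitely generated
relative to `m`. -/
def fgConductor : Ideal R where
  carrier := {s | ∃ N : Submodule R M, N.FG ∧ ∀ y : M, s • y ∈ N}
  zero_mem' := ⟨⊥, Submodule.fg_bot, fun y => by simp⟩
  add_mem' := by
    rintro s t ⟨N, hN, hs⟩ ⟨L, hL, ht⟩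
    refine ⟨N ⊔ L, hN.sup hL, fun y => ?_⟩
    rw [add_smul]
    exact Submodule.add_mem_sup (hs y) (ht y)
  smul_mem' := by
    rintro r s ⟨N, hN, hs⟩
    refine ⟨N, hN, fun y => ?_⟩
    rw [smul_assoc]
    exact N.smul_mem r (hs y)

variable {R M}

theorem mem_fgConductor {s : R} :
    s ∈ fgConductor R M ↔ ∃ N : Submodule R M, N.FG ∧ ∀ y : M, s • y ∈ N :=
  Iff.rfl

theorem mem_fgConductor_iff_exists_fin {s : R} :
    s ∈ fgConductor R M ↔
      ∃ (n : ℕ) (f : (Fin n → R) →ₗ[R] M), ∀ y : M, s • y ∈ LinearMap.range f := by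
  simp only [mem_fgConductor, Submodule.fg_iff_exists_fin_linearMap]
  exact ⟨fun ⟨_, ⟨n, f, rfl⟩, hs⟩ => ⟨n, f, hs⟩, fun ⟨n, f, hs⟩ => ⟨_, ⟨n, f, rfl⟩, hs⟩⟩

theorem mul_mem_fgConductor_ker {K L P : Type*} [AddCommGroup K] [Module R K] [Module.Finite R K]
    [AddCommGroup L] [Module R L] [Module.Projective R L]
    [AddCommGroup P] [Module R P] [Module.Finite R P] [Module.Projective R P]
    {p : P →ₗ[R] M} (hp : Function.Surjective p) {g : K →ₗ[R] L} {f : L →ₗ[R] M} {a b : R}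
    (hfg : f ∘ₗ g = 0) (ha : ∀ y : M, a • y ∈ LinearMap.range f)
    (hb : ∀ x ∈ LinearMap.ker f, b • x ∈ LinearMap.range g) :
    a * b ∈ fgConductor R (LinearMap.ker p) := by
  obtain ⟨α, hα⟩ : ∃ α : L →ₗ[R] P, p ∘ₗ α = f := Module.projective_lifting_property p f hp
  obtain ⟨β, hβ⟩ : ∃ β : P →ₗ[R] L, f ∘ₗ β = a • p := by
    obtain ⟨β, hβ⟩ := Module.projective_lifting_property f.rangeRestrict
      ((a • p).codRestrict (LinearMap.range f) fun x => ha (p x)) f.surjective_rangeRestrict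
    exact ⟨β, LinearMap.ext fun x => congrArg Subtype.val (LinearMap.congr_fun hβ x)⟩
  replace hα (x : L) : p (α x) = f x := LinearMap.congr_fun hα x
  replace hβ (x : P) : f (β x) = a • p x := LinearMap.congr_fun hβ x
  let u : K →ₗ[R] LinearMap.ker p := (α ∘ₗ g).codRestrict _ fun x => by
    simpa [hα] using LinearMap.congr_fun hfg x
  let v : P →ₗ[R] LinearMap.ker p := (a • LinearMap.id - α ∘ₗ β).codRestrict _ fun x => by
    simp [hα, hβ]
  refine ⟨LinearMap.range (u.coprod v), Module.Finite.iff_fg.1 inferInstance, fun x => ?_⟩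
  obtain ⟨y, hy⟩ : b • β x ∈ LinearMap.range g :=
    hb (β x) (by rw [LinearMap.mem_ker, hβ, x.2, smul_zero])
  have hx : α (g y) + (a • (b • (x : P)) - α (β (b • (x : P)))) = (a * b) • (x : P) := by
    rw [hy, map_smul, map_smul, map_smul]
    module
  exact ⟨(y, b • (x : P)), Subtype.ext hx⟩

end FGConductor

section Almost

variable {R : Type u} [CommRing R] {m : Ideal R} {M : Type u} [AddCommGroup M] [Module R M]

theorem isAlmostFG_iff_le_fgConductor : IsAlmostFG m M ↔ m ≤ fgConductor R M :=
  forall₂_congr fun _ _ => mem_fgConductor_iff_exists_fin.symm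

theorem IsAlmostFG.of_finite [Module.Finite R M] : IsAlmostFG m M :=
  isAlmostFG_iff_le_fgConductor.2 fun _ _ => ⟨⊤, Module.Finite.fg_top, fun _ => trivial⟩

theorem IsAlmostFP.isAlmostFG_ker (hm : m * m = m) (hM : IsAlmostFP m M)
    {P : Type u} [AddCommGroup P] [Module R P] [Module.Finite R P] [Module.Projective R P]
    {p : P →ₗ[R] M} (hp : Function.Surjective p) : IsAlmostFG m (LinearMap.ker p) := by
  rw [isAlmostFG_iff_le_fgConductor, ← hm, Ideal.mul_le]
  intro a ha b hb
  obtain ⟨_, _, g, f, hfg, hcoker, hker⟩ := hM a ha b hb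
  exact mul_mem_fgConductor_ker hp hfg hcoker hker

theorem isAlmostFG_ker_of_isAlmostFP_range (hm : m * m = m)
    {P : Type u} [AddCommGroup P] [Module R P] [Module.Finite R P] [Module.Projective R P]
    {f : P →ₗ[R] M} (hf : IsAlmostFP m (LinearMap.range f)) : IsAlmostFG m (LinearMap.ker f) :=
  f.ker_rangeRestrict ▸ hf.isAlmostFG_ker hm f.surjective_rangeRestrict

theorem isAlmostFP_of_exists_isAlmostFG_ker
    (h : ∀ s ∈ m, ∃ (n : ℕ) (f : (Fin n → R) →ₗ[R] M),
      (∀ y : M, s • y ∈ LinearMap.range f) ∧ IsAlmostFG m (LinearMap.ker f)) :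
    IsAlmostFP m M := by
  intro s hs t ht
  obtain ⟨n, f, hcoker, hker⟩ := h s hs
  obtain ⟨k, g, hg⟩ := hker t ht
  refine ⟨n, k, (LinearMap.ker f).subtype ∘ₗ g, f, LinearMap.ext fun x => (g x).2, hcoker,
    fun x hx => ?_⟩
  obtain ⟨y, hy⟩ := hg ⟨x, hx⟩
  exact ⟨y, congrArg Subtype.val hy⟩

end Almost

theorem almostCoherent_iff_fg_ideal_almostFP_general
    {R : Type u} [CommRing R] (m : Ideal R) (hm : m * m = m)
    (M : Type u) [AddCommGroup M] [Module R M] :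
    (∀ N : Submodule R M, IsAlmostFG m N → IsAlmostFP m N) ↔
      (∀ N : Submodule R M, N.FG → IsAlmostFP m N) := by
  refine ⟨fun h N hN => ?_, fun h N hN => isAlmostFP_of_exists_isAlmostFG_ker fun s hs => ?_⟩
  · have : Module.Finite R N := Module.Finite.iff_fg.2 hN
    exact h N IsAlmostFG.of_finite
  · obtain ⟨n, f, hcoker⟩ := hN s hs
    have hrange : IsAlmostFP m (LinearMap.range (N.subtype ∘ₗ f)) :=
      h _ (Module.Finite.iff_fg.1 inferInstance)
    have hker : LinearMap.ker (N.subtype ∘ₗ f) = LinearMap.ker f :=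
      LinearMap.ker_comp_of_ker_eq_bot f N.ker_subtype
    exact ⟨n, f, hcoker, hker ▸ isAlmostFG_ker_of_isAlmostFP_range hm hrange⟩

/-- `R` is almost coherent iff every finitely generated ideal of `R`
is almost finitely presented. -/
theorem almostCoherent_iff_fg_ideal_almostFP
    {R : Type u} [CommRing R] (m : Ideal R) (hm : m * m = m) :
    (∀ I : Ideal R, IsAlmostFG m I → IsAlmostFP m I) ↔
      (∀ I : Ideal R, I.FG → IsAlmostFP m I) :=
  almostCoherent_iff_fg_ideal_almostFP_general m hm R
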